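/- (Free-object updates preserve G2) Let h be a heap satisfying G2 and let x be an allocated object that is free in h (i.e., the object h.owner x is open in h). If h′ is obtained from h either by updating h.owner x to an arbitrary value or by setting h.closed x to False, changing nothing else, then h′ satisfies G2. -/

import Mathlib

/-!
A free object belongs to the `owns` set of no closed allocated object, since G2 would make
that closed object its owner, whereas the owner of a free object is open (`hnot` below).
So neither update of a free `x` touches the conclusion of an instance of G2, and closing
no new object means that no new instance of G2 arises.
-/

/-- A heap records the set of allocated objects and assigns to each object
a Boolean `closed` flag, an `owner`, and a set `owns` of owned objects. -/
structure Heap (Obj : Type) where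
  alloc : Set Obj
  closed : Obj → Bool
  owner : Obj → Obj
  owns : Obj → Set Obj

/-- Ownership consistency G2: for all allocated objects `o`, `p`, if `p` is closed
and `o ∈ p.owns` then `o` is closed and `o.owner = p`. -/
def G2 {Obj : Type} (h : Heap Obj) : Prop :=
  ∀ o p, o ∈ h.alloc → p ∈ h.alloc → h.closed p = true → o ∈ h.owns p →
    h.closed o = true ∧ h.owner o = p

/-- (Free-object updates preserve G2) If `x` is allocated and free in `h`
(its owner is open), then updating `x.owner` to an arbitrary value, or setting
`x.closed` to `false`, changing nothing else, preserves G2. -/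
theorem free_update_preserves_G2 {Obj : Type} (h h' : Heap Obj) (x : Obj)
    (hG2 : G2 h)
    (hx : x ∈ h.alloc)
    (hfree : h.closed (h.owner x) = false)
    (hstep :
      -- updating `x.owner` to an arbitrary value, changing nothing else
      (h'.alloc = h.alloc ∧ h'.closed = h.closed ∧ h'.owns = h.owns ∧
        (∀ o, o ≠ x → h'.owner o = h.owner o)) ∨
      -- setting `x.closed` to `false`, changing nothing else
      (h'.alloc = h.alloc ∧ h'.owner = h.owner ∧ h'.owns = h.owns ∧
        h'.closed x = false ∧ (∀ o, o ≠ x → h'.closed o = h.closed o))) :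
    G2 h' := by
  have hnot : ∀ p, p ∈ h.alloc → h.closed p = true → x ∉ h.owns p := by
    intro p hp hc hm
    have hown := (hG2 x p hx hp hc hm).2
    rw [hown, hc] at hfree
    cases hfree
  intro o p ho hp hc hm
  rcases hstep with ⟨ha, hcl, hos, how⟩ | ⟨ha, how, hos, hxc, hcl⟩
  · rw [ha] at ho hp
    rw [hcl] at hc ⊢
    rw [hos] at hm
    have hox : o ≠ x := by
      rintro rfl
      exact hnot p hp hc hm
    rw [how o hox]
    exact hG2 o p ho hp hc hm
  · rw [ha] at ho hp
    rw [hos] at hm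
    have hpx : p ≠ x := by
      rintro rfl
      rw [hxc] at hc
      cases hc
    rw [hcl p hpx] at hc
    have hox : o ≠ x := by
      rintro rfl
      exact hnot p hp hc hm
    rw [hcl o hox, how]
    exact hG2 o p ho hp hc hm
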